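/- arXiv:2512.13519 — 2 statements merged into one kernel-verified Lean document; each statement's English description precedes it below -/
import Mathlib

section
/- Let γ ∈ SL(2,ℝ) have entries a, b, c, d and let t ∈ ℝ. Then the hyperbolic distance between the points i·e^t and γ·(i·e^t) of the upper half-plane is given by dist(i·e^t, γ·(i·e^t)) = 2·arsinh( √(b²·e^{−2t} + c²·e^{2t} + a² + d² − 2) / 2 ); in particular b²·e^{−2t} + c²·e^{2t} + a² + d² − 2 ≥ 0. -/
open UpperHalfPlane Matrix
open scoped MatrixGroups

/-- For `γ = (a b; c d) ∈ SL(2,ℝ)` and `t ∈ ℝ`, the hyperbolic distance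
between `i·e^t` and `γ • (i·e^t)` equals
`2·arsinh(√(b²e^{−2t} + c²e^{2t} + a² + d² − 2)/2)`; in particular the radicand is
nonnegative. -/
theorem stmt4 (γ : SL(2, ℝ)) (a b c d : ℝ)
    (ha : a = γ 0 0) (hb : b = γ 0 1) (hc : c = γ 1 0) (hd : d = γ 1 1) (t : ℝ) :
    dist (UpperHalfPlane.mk (Complex.I * Real.exp t)
        (by simp [Complex.exp_ofReal_re, Real.exp_pos]))
      (γ • UpperHalfPlane.mk (Complex.I * Real.exp t)
        (by simp [Complex.exp_ofReal_re, Real.exp_pos]) : ℍ) =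
      2 * Real.arsinh (Real.sqrt
        (b ^ 2 * Real.exp (-2 * t) + c ^ 2 * Real.exp (2 * t) + a ^ 2 + d ^ 2 - 2) / 2) ∧
    0 ≤ b ^ 2 * Real.exp (-2 * t) + c ^ 2 * Real.exp (2 * t) + a ^ 2 + d ^ 2 - 2 := by
  have hdet : a * d - b * c = 1 := by
    have h := Matrix.det_fin_two (γ : Matrix (Fin 2) (Fin 2) ℝ)
    rw [γ.det_coe] at h
    rw [ha, hb, hc, hd]; exact h.symm
  have hy : 0 < Real.exp t := Real.exp_pos t
  have e1 : Real.exp (2 * t) = Real.exp t ^ 2 := by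
    rw [← Real.exp_nat_mul]; norm_num
  have e2 : Real.exp (-2 * t) = (Real.exp t ^ 2)⁻¹ := by
    rw [← e1, ← Real.exp_neg]; congr 1; ring
  rw [e1, e2]
  have hR : 0 ≤ b ^ 2 * (Real.exp t ^ 2)⁻¹ + c ^ 2 * Real.exp t ^ 2 + a ^ 2 + d ^ 2 - 2 := by
    have : b ^ 2 * (Real.exp t ^ 2)⁻¹ + c ^ 2 * Real.exp t ^ 2 + a ^ 2 + d ^ 2 - 2
        = (b / Real.exp t + c * Real.exp t) ^ 2 + (a - d) ^ 2 := by
      field_simp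
      linear_combination 2 * Real.exp t ^ 2 * hdet
    rw [this]; positivity
  refine ⟨?_, hR⟩
  generalize_proofs hz
  set z : ℍ := UpperHalfPlane.mk (Complex.I * Real.exp t) hz with hzdef
  have hzc : (z : ℂ) = Complex.I * Real.exp t := rfl
  have hzim : z.im = Real.exp t := by
    rw [← UpperHalfPlane.coe_im, hzc]; simp [-Complex.ofReal_exp]
  have hw := UpperHalfPlane.coe_specialLinearGroup_apply γ z
  have hv := (γ • z).im_pos
  simp only [Algebra.algebraMap_self, RingHom.id_apply, ← ha, ← hb, ← hc, ← hd] at hw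
  rw [UpperHalfPlane.dist_eq, Complex.dist_eq_re_im, hzim]
  rw [← UpperHalfPlane.coe_im] at hv ⊢
  generalize ((γ • z : ℍ) : ℂ) = w at *
  rw [hzc] at hw ⊢
  clear_value z
  clear hzdef hz e1 e2
  generalize Real.exp t = y at *
  have hN : 0 < c ^ 2 * y ^ 2 + d ^ 2 := by
    by_contra hcon
    have h1 : c * y = 0 := by nlinarith [sq_nonneg (c * y), sq_nonneg d]
    have h2 : d = 0 := by nlinarith [sq_nonneg (c * y), sq_nonneg d]
    have h3 : c = 0 := by simpa [hy.ne'] using h1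
    simp [h2, h3] at hdet
  obtain ⟨N, hNd⟩ : ∃ N, N = c ^ 2 * y ^ 2 + d ^ 2 := ⟨_, rfl⟩
  rw [← hNd] at hN
  have hn : d * d + c * y * (c * y) = N := by rw [hNd]; ring
  have hre : w.re = (a * c * y ^ 2 + b * d) / N := by
    rw [hw]; simp [Complex.div_re, Complex.normSq_apply, hn]
    field_simp
    ring
  have him : w.im = y / N := by
    rw [hw]
    simp [Complex.div_im, Complex.normSq_apply, hn]
    field_simp
    linear_combination hdet
  have key : (b ^ 2 * (y ^ 2)⁻¹ + c ^ 2 * y ^ 2 + a ^ 2 + d ^ 2 - 2) * (y * w.im)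
      = ((Complex.I * (y : ℂ)).re - w.re) ^ 2 + ((Complex.I * (y : ℂ)).im - w.im) ^ 2 := by
    have h1 : (Complex.I * (y : ℂ)).re = 0 := by simp
    have h2 : (Complex.I * (y : ℂ)).im = y := by simp
    rw [h1, h2, hre, him]
    field_simp
    rw [hNd]
    linear_combination (y ^ 2 * (a * d - b * c + 1)) * hdet
  rw [← key, Real.sqrt_mul hR]
  have : 0 < √(y * w.im) := Real.sqrt_pos.2 (mul_pos hy hv)
  congr 2
  field_simp
end

section
/- Let γ ∈ SL(2,ℝ) have entries a, b, c, d with b ≠ 0, and set t = log|b|. Then the hyperbolic distance between i·e^t and γ·(i·e^t) in the upper half-plane equals 2·arsinh( √(b²c² + a² + d² − 1) / 2 ). -/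
open UpperHalfPlane Matrix
open scoped MatrixGroups

/-- For `γ = (a b; c d) ∈ SL(2,ℝ)` with `b ≠ 0` and `t = log |b|`,
the hyperbolic distance between `i·e^t` and `γ • (i·e^t)` equals
`2·arsinh(√(b²c² + a² + d² − 1)/2)`. -/
theorem stmt5 (γ : SL(2, ℝ)) (a b c d : ℝ)
    (ha : a = γ 0 0) (hb : b = γ 0 1) (hc : c = γ 1 0) (hd : d = γ 1 1)
    (hb0 : b ≠ 0) (t : ℝ) (ht : t = Real.log |b|) :
    dist (UpperHalfPlane.mk (Complex.I * Real.exp t)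
        (by simp [Complex.exp_ofReal_re, Real.exp_pos]))
      (γ • UpperHalfPlane.mk (Complex.I * Real.exp t)
        (by simp [Complex.exp_ofReal_re, Real.exp_pos]) : ℍ) =
      2 * Real.arsinh (Real.sqrt (b ^ 2 * c ^ 2 + a ^ 2 + d ^ 2 - 1) / 2) := by
  have hy : Real.exp t = |b| := by rw [ht, Real.exp_log (abs_pos.mpr hb0)]
  have hdet : a * d - b * c = 1 := by
    have h := γ.det_coe
    rw [Matrix.det_fin_two] at h
    rw [ha, hb, hc, hd]; exact h
  have hypos := Real.exp_pos t
  have hsq : Real.exp t ^ 2 = b ^ 2 := by rw [hy, sq_abs]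
  generalize hz : UpperHalfPlane.mk (Complex.I * Real.exp t) _ = z
  have hzc : (z : ℂ) = Complex.I * Real.exp t := by rw [← hz]
  have hzim : z.im = Real.exp t := by rw [← hz]; simp [UpperHalfPlane.im, Complex.exp_ofReal_re]
  clear hz
  generalize Real.exp t = y at *
  have hD0 : ((c : ℂ) * z + d) ≠ 0 := by
    intro h
    rw [hzc] at h
    have h1 := congrArg Complex.re h
    have h2 := congrArg Complex.im h
    simp at h1 h2
    rcases h2 with h2 | h2
    · subst h1; rw [h2] at hdet; norm_num at hdet
    · exact hypos.ne' h2
  have hw : ((γ • z : ℍ) : ℂ) * ((c : ℂ) * z + d) = a * z + b := by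
    rw [UpperHalfPlane.coe_specialLinearGroup_apply]
    simp only [Algebra.algebraMap_self, RingHom.id_apply, ← ha, ← hb, ← hc, ← hd]
    exact div_mul_cancel₀ _ hD0
  have hwim : (γ • z : ℍ).im = ((γ • z : ℍ) : ℂ).im := rfl
  have hpos := (γ • z : ℍ).im_pos
  rw [UpperHalfPlane.dist_eq, hzim]
  generalize (γ • z : ℍ) = w at *
  have hX : dist (z : ℂ) w ^ 2 = (b ^ 2 * c ^ 2 + a ^ 2 + d ^ 2 - 1) * (y * w.im) := by
    rw [Complex.dist_eq, Complex.sq_norm, Complex.normSq_apply, hwim, hzc]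
    rw [hzc] at hw hD0
    have h1 := congrArg Complex.re hw
    have h2 := congrArg Complex.im hw
    simp at h1 h2 ⊢
    generalize w.re = u at *
    generalize w.im = v at *
    have hN : 0 < c ^ 2 * y ^ 2 + d ^ 2 := by
      rcases eq_or_ne d 0 with h | h
      · have : c ≠ 0 := by
          rintro rfl
          rw [h] at hdet; norm_num at hdet
        positivity
      · positivity
    have hv : v * (c ^ 2 * y ^ 2 + d ^ 2) = y := by
      linear_combination d * h2 - c * y * h1 + y * hdet
    have hu : u * (c ^ 2 * y ^ 2 + d ^ 2) = a * c * y ^ 2 + b * d := by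
      linear_combination d * h1 + c * y * h2
    have hv' : v = y / (c ^ 2 * y ^ 2 + d ^ 2) := by rw [eq_div_iff hN.ne', hv]
    have hu' : u = (a * c * y ^ 2 + b * d) / (c ^ 2 * y ^ 2 + d ^ 2) := by
      rw [eq_div_iff hN.ne', hu]
    have key : (a * c * y ^ 2 + b * d) ^ 2 + (y * (c ^ 2 * y ^ 2 + d ^ 2) - y) ^ 2
        = (b ^ 2 * c ^ 2 + a ^ 2 + d ^ 2 - 1) * y ^ 2 * (c ^ 2 * y ^ 2 + d ^ 2) := by
      rw [show (y * (c ^ 2 * y ^ 2 + d ^ 2) - y) ^ 2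
        = y ^ 2 * ((c ^ 2 * y ^ 2 + d ^ 2) - 1) ^ 2 by ring, hsq]
      have : b ^ 2 * ((a * c * b + d) ^ 2 + (c ^ 2 * b ^ 2 + d ^ 2 - 1) ^ 2)
        = b ^ 2 * ((b ^ 2 * c ^ 2 + a ^ 2 + d ^ 2 - 1) * (c ^ 2 * b ^ 2 + d ^ 2)) := by
        congr 1
        have e : b * c = a * d - 1 := by linarith
        rw [show a * c * b = a * (b * c) by ring, show c ^ 2 * b ^ 2 = (b * c) ^ 2 by ring,
          show b ^ 2 * c ^ 2 = (b * c) ^ 2 by ring, e]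
        ring
      linear_combination this
    rw [hu', hv']
    field_simp
    linear_combination key
  have hp : 0 < y * w.im := mul_pos hypos hpos
  have hX' : dist (z : ℂ) w = √(b ^ 2 * c ^ 2 + a ^ 2 + d ^ 2 - 1) * √(y * w.im) := by
    rw [← Real.sqrt_mul' _ hp.le, ← hX, Real.sqrt_sq dist_nonneg]
  have hs : √(y * w.im) ≠ 0 := (Real.sqrt_pos.mpr hp).ne'
  rw [hX']
  congr 2
  field_simp
end
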